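/- (Theorem 1) Let P ∈ R^{n×n} be symmetric, X ∈ R^{n×d}, E = P − X X^T, ε = ‖E‖_F > 0. Let o = min(rank(X), k), let U_o ∈ R^{n×o} be the left singular vectors of X associated with its o largest singular values, Q = U_o U_o^T − (1/2) I_n, s = ⟨E Q, Q E⟩_F/‖E Q‖_F², δ = 1 − sqrt((1+s)/2), σ_o the o-th largest singular value of X, and σ* the (o+1)-th largest singular value of X (σ* = 0 if rank(X) ≤ o). Assume E Q ≠ Q E (so δ > 0). If sqrt(o)·ε/σ_o² ≤ δ/2 and sqrt(n−o)·σ*² ≤ δε/2, then there exists W ∈ R^{d×k} such that, with H = P X W, ‖P − H H^T‖_F ≤ ε. That is, H H^T approximates P at least as well as X X^T does. -/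

import Mathlib

open Matrix

/-- Frobenius norm of a real matrix: ‖M‖_F = sqrt(tr(Mᵀ M)). -/
noncomputable def frobNorm {m n : Type*} [Fintype m] [Fintype n]
    (M : Matrix m n ℝ) : ℝ :=
  Real.sqrt ((Mᵀ * M).trace)

/-- Frobenius inner product of real matrices: ⟨M, N⟩_F = tr(Mᵀ N). -/
noncomputable def frobInner {m n : Type*} [Fintype m] [Fintype n]
    (M N : Matrix m n ℝ) : ℝ :=
  (Mᵀ * N).trace


attribute [local instance] Matrix.frobeniusNormedAddCommGroup Matrix.frobeniusNormedSpace

lemma frob_eq_norm {m n : Type*} [Fintype m] [Fintype n]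
    (M : Matrix m n ℝ) : frobNorm M = ‖M‖ := by
  rw [frobNorm, Matrix.frobenius_norm_def, ← Real.sqrt_eq_rpow]
  congr 1
  simp only [Matrix.trace, Matrix.diag, Matrix.mul_apply, Matrix.transpose_apply]
  rw [Finset.sum_comm]
  refine Finset.sum_congr rfl fun i _ => Finset.sum_congr rfl fun j _ => ?_
  rw [Real.rpow_two, Real.norm_eq_abs, sq_abs, sq]

lemma frob_sq {m n : Type*} [Fintype m] [Fintype n]
    (M : Matrix m n ℝ) : frobNorm M ^ 2 = (Mᵀ * M).trace := by
  rw [frobNorm, Real.sq_sqrt]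
  simp only [Matrix.trace, Matrix.diag, Matrix.mul_apply, Matrix.transpose_apply]
  exact Finset.sum_nonneg fun i _ => Finset.sum_nonneg fun j _ => mul_self_nonneg _

lemma frob_nonneg {m n : Type*} [Fintype m] [Fintype n]
    (M : Matrix m n ℝ) : 0 ≤ frobNorm M := Real.sqrt_nonneg _

lemma frob_UDU {n m : ℕ} (U : Matrix (Fin n) (Fin m) ℝ) (hU : Uᵀ * U = 1)
    (D : Fin m → ℝ) (c : ℝ) (hc : 0 ≤ c) (hD : ∀ i, |D i| ≤ c) :
    frobNorm (U * Matrix.diagonal D * Uᵀ) ≤ Real.sqrt m * c := by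
  apply le_of_sq_le_sq _ (by positivity)
  rw [frob_sq, mul_pow, Real.sq_sqrt (by positivity)]
  have h : (U * Matrix.diagonal D * Uᵀ)ᵀ * (U * Matrix.diagonal D * Uᵀ)
      = U * (Matrix.diagonal D * Matrix.diagonal D * Uᵀ) := by
    simp only [Matrix.transpose_mul, Matrix.transpose_transpose, Matrix.diagonal_transpose,
      Matrix.mul_assoc]
    rw [← Matrix.mul_assoc Uᵀ U, hU, Matrix.one_mul]
  rw [h, Matrix.trace_mul_comm, Matrix.mul_assoc, hU, Matrix.mul_one,
    Matrix.diagonal_mul_diagonal, Matrix.trace_diagonal]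
  calc ∑ i, D i * D i ≤ ∑ _i : Fin m, c ^ 2 := by
        refine Finset.sum_le_sum fun i _ => ?_
        rw [← sq, ← sq_abs]
        exact pow_le_pow_left₀ (abs_nonneg _) (hD i) 2
    _ = m * c ^ 2 := by simp

lemma card_le {n o e : ℕ} (Uo : Matrix (Fin n) (Fin o) ℝ) (Ue : Matrix (Fin n) (Fin e) ℝ)
    (hUo : Uoᵀ * Uo = 1) (hUe : Ueᵀ * Ue = 1) (hUoUe : Uoᵀ * Ue = 0) : o + e ≤ n := by
  have h2 : Ueᵀ * Uo = 0 := by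
    have := congrArg Matrix.transpose hUoUe
    simpa using this
  have h : (Matrix.fromCols Uo Ue)ᵀ * Matrix.fromCols Uo Ue = 1 := by
    rw [Matrix.transpose_fromCols, Matrix.fromRows_mul_fromCols, hUo, hUe, hUoUe, h2,
      Matrix.fromBlocks_one]
  have h3 := Matrix.rank_mul_le_right (Matrix.fromCols Uo Ue)ᵀ (Matrix.fromCols Uo Ue)
  rw [h, Matrix.rank_one] at h3
  have h4 := Matrix.rank_le_card_height (Matrix.fromCols Uo Ue)
  simpa using h3.trans h4

/-- Theorem 1: if ε = ‖P − X Xᵀ‖_F > 0, E Q ≠ Q E (Assumption 1),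
√o·ε/σₒ² ≤ δ/2 and √(n−o)·σ*² ≤ δε/2, then there exists W such that
H = P X W satisfies ‖P − H Hᵀ‖_F ≤ ε.
Here X = Uₒ Σₒ Vₒᵀ + Uₑ Σₑ Vₑᵀ is the SVD of X split into the o leading
singular triples (o = min(rank X, k)) and the rest, σₒ is the o-th largest
singular value and σ* the (o+1)-th largest singular value of X. -/
theorem sgnn_theorem_1
    {n d k o e : ℕ}
    (P : Matrix (Fin n) (Fin n) ℝ) (hP : Pᵀ = P)
    (X : Matrix (Fin n) (Fin d) ℝ)
    (Uo : Matrix (Fin n) (Fin o) ℝ) (Ue : Matrix (Fin n) (Fin e) ℝ)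
    (Vo : Matrix (Fin d) (Fin o) ℝ) (Ve : Matrix (Fin d) (Fin e) ℝ)
    (so : Fin o → ℝ) (se : Fin e → ℝ)
    (hUo : Uoᵀ * Uo = 1) (hUe : Ueᵀ * Ue = 1) (hUoUe : Uoᵀ * Ue = 0)
    (hVo : Voᵀ * Vo = 1) (hVe : Veᵀ * Ve = 1) (hVoVe : Voᵀ * Ve = 0)
    (hX : X = Uo * Matrix.diagonal so * Voᵀ + Ue * Matrix.diagonal se * Veᵀ)
    (hso : ∀ i, 0 < so i) (hse : ∀ i, 0 ≤ se i)
    (horder : ∀ i j, se j ≤ so i)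
    (ho : o = min X.rank k)
    (σo σstar : ℝ)
    (hσo : IsLeast (Set.range so) σo)
    (hσstar : IsGreatest (insert 0 (Set.range se)) σstar) :
    let E : Matrix (Fin n) (Fin n) ℝ := P - X * Xᵀ
    let ε : ℝ := frobNorm E
    let Q : Matrix (Fin n) (Fin n) ℝ :=
      Uo * Uoᵀ - (1/2 : ℝ) • (1 : Matrix (Fin n) (Fin n) ℝ)
    let s : ℝ := frobInner (E * Q) (Q * E) / (frobNorm (E * Q)) ^ 2
    let δ : ℝ := 1 - Real.sqrt ((1 + s) / 2)
    0 < ε →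
    E * Q ≠ Q * E →
    Real.sqrt o * ε / σo ^ 2 ≤ δ / 2 →
    Real.sqrt (n - o : ℕ) * σstar ^ 2 ≤ δ * ε / 2 →
    ∃ W : Matrix (Fin d) (Fin k) ℝ,
      frobNorm (P - (P * X * W) * (P * X * W)ᵀ) ≤ ε := by
  intro E ε Q s δ hε _ h1 h2
  have hE : Eᵀ = E := by
    simp only [E, Matrix.transpose_sub, Matrix.transpose_mul, Matrix.transpose_transpose, hP]
  have hQ : Qᵀ = Q := by simp [Q, Matrix.transpose_sub]
  have hσpos : 0 < σo := by obtain ⟨i, hi⟩ := hσo.1; rw [← hi]; exact hso i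
  have hσs : 0 ≤ σstar := hσstar.2 (Set.mem_insert _ _)
  have hne : o + e ≤ n := card_le Uo Ue hUo hUe hUoUe
  have hok : o ≤ k := ho ▸ min_le_right _ _
  have hUU : Uo * Uoᵀ * (Uo * Uoᵀ) = Uo * Uoᵀ := by
    rw [Matrix.mul_assoc, ← Matrix.mul_assoc Uoᵀ, hUo, Matrix.one_mul]
  have hQQ : Q * Q = (1/4 : ℝ) • (1 : Matrix (Fin n) (Fin n) ℝ) := by
    simp only [Q, Matrix.sub_mul, Matrix.mul_sub, hUU, Matrix.smul_mul, Matrix.mul_smul,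
      Matrix.one_mul, Matrix.mul_one]
    module
  have hεsq : ε ^ 2 = (E * E).trace := by
    have := frob_sq E
    rwa [hE] at this
  have hEQ : frobNorm (E * Q) ^ 2 = ε ^ 2 / 4 := by
    rw [frob_sq, Matrix.trace_mul_comm, Matrix.transpose_mul, hE, hQ, Matrix.mul_assoc,
      ← Matrix.mul_assoc Q, hQQ, hεsq]
    simp; ring
  have hQE : ((Q * E)ᵀ * (Q * E)).trace = ε ^ 2 / 4 := by
    rw [Matrix.transpose_mul, hE, hQ, Matrix.mul_assoc,
      ← Matrix.mul_assoc Q, hQQ, hεsq]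
    simp; ring
  have hin : frobInner (E * Q) (Q * E) = s * (ε ^ 2 / 4) := by
    simp only [s]; rw [hEQ]; field_simp
  have hin2 : ((Q * E)ᵀ * (E * Q)).trace = s * (ε ^ 2 / 4) := by
    rw [← hin, frobInner, ← Matrix.trace_transpose, Matrix.transpose_mul,
      Matrix.transpose_transpose]
  have hS : frobNorm (E * Q + Q * E) ^ 2 = ε ^ 2 * ((1 + s) / 2) := by
    have h4 := frob_sq (E * Q)
    rw [hEQ] at h4
    rw [frobInner] at hin
    rw [frob_sq, Matrix.transpose_add, Matrix.add_mul, Matrix.mul_add, Matrix.mul_add,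
      Matrix.trace_add, Matrix.trace_add, Matrix.trace_add, hin2, hQE, hin, ← h4]
    ring
  have hS' : frobNorm (E * Q + Q * E) = ε * (1 - δ) := by
    rw [← Real.sqrt_sq (frob_nonneg (E * Q + Q * E)), hS, Real.sqrt_mul (sq_nonneg _),
      Real.sqrt_sq hε.le]
    simp only [δ]; ring
  -- the remainder terms
  have hT : frobNorm (Ue * Matrix.diagonal (fun i => se i ^ 2) * Ueᵀ) ≤ δ * ε / 2 := by
    refine (frob_UDU Ue hUe _ (σstar ^ 2) (by positivity) ?_).trans (le_trans ?_ h2)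
    · intro i
      rw [abs_of_nonneg (by positivity)]
      exact pow_le_pow_left₀ (hse i) (hσstar.2 (Set.mem_insert_of_mem _ ⟨i, rfl⟩)) 2
    · have : e ≤ n - o := by omega
      gcongr
  have hR : frobNorm (Uo * Matrix.diagonal (fun i => (so i ^ 2)⁻¹) * Uoᵀ)
      ≤ Real.sqrt o * (σo ^ 2)⁻¹ := by
    refine frob_UDU Uo hUo _ _ (by positivity) ?_
    intro i
    have := hσo.2 ⟨i, rfl⟩
    rw [abs_of_nonneg (by positivity)]
    gcongr
  set G := Uo * Matrix.diagonal (fun i => (so i ^ 2)⁻¹) * Uoᵀ with hG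
  set T := Ue * Matrix.diagonal (fun i => se i ^ 2) * Ueᵀ with hTdef
  have hEGE : frobNorm (E * G * E) ≤ δ * ε / 2 := by
    have ha : frobNorm (E * G * E) ≤ ε * frobNorm G * ε := by
      simp only [ε, frob_eq_norm]
      refine (Matrix.frobenius_norm_mul _ _).trans ?_
      gcongr
      exact Matrix.frobenius_norm_mul _ _
    calc _ ≤ ε * frobNorm G * ε := ha
      _ ≤ ε * (Real.sqrt o * (σo ^ 2)⁻¹) * ε := by gcongr
      _ = (Real.sqrt o * ε / σo ^ 2) * ε := by ring
      _ ≤ δ / 2 * ε := by gcongr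
      _ = _ := by ring
  -- the weight
  let R : Matrix (Fin o) (Fin k) ℝ := (1 : Matrix (Fin k) (Fin k) ℝ).submatrix (Fin.castLE hok) id
  have hRR : R * Rᵀ = 1 := by
    ext i j
    simp [R, Matrix.mul_apply, Matrix.one_apply]
  have hVeVo : Veᵀ * Vo = 0 := by
    have := congrArg Matrix.transpose hVoVe
    simpa using this
  have hUeUo : Ueᵀ * Uo = 0 := by
    have := congrArg Matrix.transpose hUoUe
    simpa using this
  have hXV : X * Vo = Uo * Matrix.diagonal so := by
    rw [hX, Matrix.add_mul, Matrix.mul_assoc, hVo, Matrix.mul_assoc (Ue * _), hVeVo]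
    simp
  have hXX : X * Xᵀ = Uo * Matrix.diagonal (fun i => so i ^ 2) * Uoᵀ + T := by
    have a1 : Xᵀ = Vo * Matrix.diagonal so * Uoᵀ + Ve * Matrix.diagonal se * Ueᵀ := by
      rw [hX]; simp [Matrix.transpose_mul, Matrix.mul_assoc]
    have a2 : X * Ve = Ue * Matrix.diagonal se := by
      rw [hX, Matrix.add_mul, Matrix.mul_assoc, hVoVe, Matrix.mul_assoc (Ue * _), hVe]
      simp
    rw [a1, Matrix.mul_add, ← Matrix.mul_assoc, ← Matrix.mul_assoc, hXV, ← Matrix.mul_assoc,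
      ← Matrix.mul_assoc, a2, Matrix.mul_assoc Uo, Matrix.mul_assoc Ue,
      Matrix.diagonal_mul_diagonal, Matrix.diagonal_mul_diagonal, hTdef]
    simp only [sq]
  have hPE : P = X * Xᵀ + E := by simp [E]
  let Di := Matrix.diagonal (fun i => (so i ^ 2)⁻¹)
  have hXXU : X * Xᵀ * Uo = Uo * Matrix.diagonal (fun i => so i ^ 2) := by
    rw [hXX, Matrix.add_mul, Matrix.mul_assoc, hUo, hTdef, Matrix.mul_assoc _ Ueᵀ, hUeUo]
    simp
  have hH : P * X * (Vo * Di) =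
      Uo * Matrix.diagonal so + E * (Uo * Matrix.diagonal (fun i => (so i)⁻¹)) := by
    have : P * X * (Vo * Di) = P * Uo * (Matrix.diagonal so * Di) := by
      rw [← Matrix.mul_assoc, Matrix.mul_assoc P X Vo, hXV]
      simp only [Matrix.mul_assoc]
    rw [this, hPE, Matrix.add_mul, hXXU, Matrix.add_mul, Matrix.mul_assoc Uo,
      Matrix.mul_assoc E Uo]
    simp only [Di, Matrix.diagonal_mul_diagonal]
    have e1 : (fun i => so i ^ 2 * (so i * (so i ^ 2)⁻¹)) = so := by
      funext i
      have := (hso i).ne'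
      field_simp
    have e2 : (fun i => so i * (so i ^ 2)⁻¹) = fun i => (so i)⁻¹ := by
      funext i
      have := (hso i).ne'
      field_simp
    rw [e1, e2]
  have hWW : (P * X * (Vo * Di * R)) * (P * X * (Vo * Di * R))ᵀ
      = (P * X * (Vo * Di)) * (P * X * (Vo * Di))ᵀ := by
    rw [← Matrix.mul_assoc (P * X), Matrix.transpose_mul _ R, Matrix.mul_assoc,
      ← Matrix.mul_assoc R, hRR, Matrix.one_mul]
  have hd1 : Matrix.diagonal so * Matrix.diagonal (fun i => (so i)⁻¹) = 1 := by
    rw [Matrix.diagonal_mul_diagonal, ← Matrix.diagonal_one]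
    congr 1; ext i; exact mul_inv_cancel₀ (hso i).ne'
  have hd2 : Matrix.diagonal (fun i => (so i)⁻¹) * Matrix.diagonal so = 1 := by
    rw [Matrix.diagonal_mul_diagonal, ← Matrix.diagonal_one]
    congr 1; ext i; exact inv_mul_cancel₀ (hso i).ne'
  have hd3 : Matrix.diagonal so * Matrix.diagonal so = Matrix.diagonal (fun i => so i ^ 2) := by
    rw [Matrix.diagonal_mul_diagonal]; simp only [sq]
  have hd4 : Matrix.diagonal (fun i => (so i)⁻¹) * Matrix.diagonal (fun i => (so i)⁻¹)
      = Matrix.diagonal (fun i => (so i ^ 2)⁻¹) := by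
    rw [Matrix.diagonal_mul_diagonal]; simp only [sq, mul_inv]
  have key : ∀ A B : Matrix (Fin o) (Fin o) ℝ, Uo * A * (B * Uoᵀ) = Uo * (A * B) * Uoᵀ := by
    intro A B; simp only [Matrix.mul_assoc]
  have hHH : (P * X * (Vo * Di)) * (P * X * (Vo * Di))ᵀ
      = Uo * Matrix.diagonal (fun i => so i ^ 2) * Uoᵀ + Uo * Uoᵀ * E + E * (Uo * Uoᵀ)
        + E * G * E := by
    rw [hH, hG]
    simp only [Matrix.transpose_add, Matrix.transpose_mul, Matrix.diagonal_transpose, hE,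
      Matrix.add_mul, Matrix.mul_add]
    rw [key, hd3, ← Matrix.mul_assoc _ _ E, key, hd1, Matrix.mul_assoc E, key, hd2,
      Matrix.mul_assoc E _ (_ * E), ← Matrix.mul_assoc _ _ E, key, hd4, Matrix.mul_one,
      Matrix.mul_assoc E _ E]
    abel
  have hfin : P - (P * X * (Vo * Di * R)) * (P * X * (Vo * Di * R))ᵀ
      = T - (E * Q + Q * E) - E * G * E := by
    rw [hWW, hHH]
    have hq : E * Q + Q * E = E * (Uo * Uoᵀ) + Uo * Uoᵀ * E - E := by
      simp only [Q, Matrix.sub_mul, Matrix.mul_sub, Matrix.smul_mul, Matrix.mul_smul,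
        Matrix.one_mul, Matrix.mul_one]
      module
    rw [hq]
    nth_rewrite 1 [hPE]
    rw [hXX]
    abel
  refine ⟨Vo * Di * R, ?_⟩
  rw [hfin]
  have htri : frobNorm (T - (E * Q + Q * E) - E * G * E)
      ≤ frobNorm T + frobNorm (E * Q + Q * E) + frobNorm (E * G * E) := by
    simp only [frob_eq_norm]
    exact (norm_sub_le _ _).trans (by gcongr; exact norm_sub_le _ _)
  linarith
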